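/- Weighted Lorentz comparison of a function with its maximal rearrangement: Let p > 1 and c > 0, and let w : (0,1] → [0,∞) be an increasing function satisfying w(x) ≤ c·a^{−1/p}·w(x·a) for all 0 < a ≤ 1 and all x ∈ (0,1]. Then for every integrable random variable ξ on a probability space, sup_{x∈(0,1]} w(x)·ξ**(x) ≤ (c·p/(p−1)) · sup_{x∈(0,1]} w(x)·ξ*(x). -/

import Mathlib

/-!
Rescaling turns the average into `ξ**(x) = ∫₀¹ ξ*(xa) da`. Since `w(x) ≤ φ(a)·w(xa)`, the integrand
of `w(x)·ξ**(x)` is at most `φ(a)·w(xa)·ξ*(xa) ≤ φ(a)·sup w·ξ*`, so the constant is `∫₀¹ φ`. For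
`φ(a) = c·a^(-1/p)` this is `c·p/(p-1)`.
-/

open MeasureTheory ENNReal

/-- The decreasing rearrangement `ξ*(t) = inf { s ≥ 0 : P(|ξ| > s) ≤ t }`. -/
noncomputable def decRearr {Ω : Type*} [MeasureSpace Ω] (ξ : Ω → ℝ) (t : ℝ) : ℝ :=
  sInf {s : ℝ | 0 ≤ s ∧ volume {ω | s < |ξ ω|} ≤ ENNReal.ofReal t}

/-- The maximal function `ξ**(t) = (1/t)·∫₀^t ξ*(u) du`. -/
noncomputable def maxRearr {Ω : Type*} [MeasureSpace Ω] (ξ : Ω → ℝ) (t : ℝ) : ℝ :=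
  (1 / t) * ∫ u in (0 : ℝ)..t, decRearr ξ u

theorem mul_lintegral_comp_mul_le_lintegral_mul_iSup {w φ f : ℝ → ℝ≥0∞} {b x : ℝ}
    (hφ : AEMeasurable φ (volume.restrict (Set.Ioc 0 1))) (hx : x ∈ Set.Ioc 0 b)
    (hw : ∀ a ∈ Set.Ioc (0 : ℝ) 1, w x ≤ φ a * w (x * a)) :
    w x * ∫⁻ a in Set.Ioc (0 : ℝ) 1, f (x * a) ≤
      (∫⁻ a in Set.Ioc (0 : ℝ) 1, φ a) * ⨆ y ∈ Set.Ioc 0 b, w y * f y := by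
  have pointwise : ∀ a ∈ Set.Ioc (0 : ℝ) 1,
      w x * f (x * a) ≤ φ a * ⨆ y ∈ Set.Ioc 0 b, w y * f y := by
    intro a ha
    have hxa : x * a ∈ Set.Ioc 0 b :=
      ⟨mul_pos hx.1 ha.1, (mul_le_of_le_one_right hx.1.le ha.2).trans hx.2⟩
    calc w x * f (x * a) ≤ φ a * w (x * a) * f (x * a) := by gcongr; exact hw a ha
      _ = φ a * (w (x * a) * f (x * a)) := mul_assoc _ _ _
      _ ≤ φ a * ⨆ y ∈ Set.Ioc 0 b, w y * f y := by
        gcongr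
        exact le_iSup₂ (f := fun y (_ : y ∈ Set.Ioc 0 b) => w y * f y) (x * a) hxa
  calc w x * ∫⁻ a in Set.Ioc (0 : ℝ) 1, f (x * a)
      ≤ ∫⁻ a in Set.Ioc (0 : ℝ) 1, w x * f (x * a) := lintegral_const_mul_le _ _
    _ ≤ ∫⁻ a in Set.Ioc (0 : ℝ) 1, φ a * ⨆ y ∈ Set.Ioc 0 b, w y * f y :=
      setLIntegral_mono' measurableSet_Ioc pointwise
    _ = (∫⁻ a in Set.Ioc (0 : ℝ) 1, φ a) * ⨆ y ∈ Set.Ioc 0 b, w y * f y :=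
      lintegral_mul_const'' _ hφ

theorem lintegral_Ioc_ofReal_rpow {r b : ℝ} (hr : -1 < r) (hb : 0 ≤ b) :
    ∫⁻ a in Set.Ioc 0 b, ENNReal.ofReal (a ^ r) = ENNReal.ofReal (b ^ (r + 1) / (r + 1)) := by
  have integrable : IntegrableOn (fun a : ℝ => a ^ r) (Set.Ioc 0 b) :=
    (intervalIntegrable_iff_integrableOn_Ioc_of_le hb).1
      (intervalIntegral.intervalIntegrable_rpow' hr)
  have nonneg : ∀ᵐ a ∂volume.restrict (Set.Ioc 0 b), 0 ≤ a ^ r :=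
    (ae_restrict_mem measurableSet_Ioc).mono fun a ha => Real.rpow_nonneg ha.1.le r
  rw [← ofReal_integral_eq_lintegral_ofReal integrable nonneg,
    ← intervalIntegral.integral_of_le hb, integral_rpow (Or.inl hr),
    Real.zero_rpow (by linarith), sub_zero]

theorem lintegral_Ioc_ofReal_const_mul_rpow_neg_one_div {p : ℝ} (hp : 1 < p) (c : ℝ) :
    ∫⁻ a in Set.Ioc (0 : ℝ) 1, ENNReal.ofReal c * ENNReal.ofReal (a ^ (-(1 / p))) =
      ENNReal.ofReal (c * p / (p - 1)) := by
  have hp₀ : 0 < p := by linarith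
  have hr : -1 < -(1 / p) := neg_lt_neg ((div_lt_one hp₀).2 hp)
  have nonneg : 0 ≤ p / (p - 1) := div_nonneg hp₀.le (sub_nonneg.2 hp.le)
  have constant : 1 / (-(1 / p) + 1) = p / (p - 1) := by
    rw [neg_add_eq_sub, one_sub_div hp₀.ne', one_div_div]
  rw [lintegral_const_mul _ (by fun_prop), lintegral_Ioc_ofReal_rpow hr zero_le_one,
    Real.one_rpow, constant, ← ENNReal.ofReal_mul' nonneg, mul_div_assoc]

section Rearrangement

variable {Ω : Type*} [MeasureSpace Ω]

theorem decRearr_nonneg (ξ : Ω → ℝ) (t : ℝ) : 0 ≤ decRearr ξ t :=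
  Real.sInf_nonneg fun _ hs => hs.1

theorem maxRearr_eq_integral_decRearr_mul (ξ : Ω → ℝ) {x : ℝ} (hx : x ≠ 0) :
    maxRearr ξ x = ∫ a in (0 : ℝ)..1, decRearr ξ (x * a) := by
  rw [intervalIntegral.integral_comp_mul_left _ hx, mul_zero, mul_one, smul_eq_mul, maxRearr,
    one_div]

-- Only an inequality: where `ξ*` is not integrable, the Bochner integral in `maxRearr` is `0`.
theorem ofReal_maxRearr_le_lintegral (ξ : Ω → ℝ) {x : ℝ} (hx : x ≠ 0) :
    ENNReal.ofReal (maxRearr ξ x) ≤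
      ∫⁻ a in Set.Ioc (0 : ℝ) 1, ENNReal.ofReal (decRearr ξ (x * a)) := by
  rw [maxRearr_eq_integral_decRearr_mul ξ hx, intervalIntegral.integral_of_le zero_le_one]
  calc ENNReal.ofReal (∫ a in Set.Ioc (0 : ℝ) 1, decRearr ξ (x * a))
      ≤ ‖∫ a in Set.Ioc (0 : ℝ) 1, decRearr ξ (x * a)‖ₑ := Real.ofReal_le_enorm _
    _ ≤ ∫⁻ a in Set.Ioc (0 : ℝ) 1, ‖decRearr ξ (x * a)‖ₑ := enorm_integral_le_lintegral_enorm _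
    _ = ∫⁻ a in Set.Ioc (0 : ℝ) 1, ENNReal.ofReal (decRearr ξ (x * a)) := by
      simp only [Real.enorm_of_nonneg (decRearr_nonneg ξ _)]

theorem weighted_sup_maxRearr_le_general {p c : ℝ} (hp : 1 < p) {w : ℝ → ℝ}
    (hw_nonneg : ∀ x ∈ Set.Ioc (0 : ℝ) 1, 0 ≤ w x)
    (hw : ∀ a : ℝ, 0 < a → a ≤ 1 → ∀ x ∈ Set.Ioc (0 : ℝ) 1,
      w x ≤ c * a ^ (-(1 / p) : ℝ) * w (x * a))
    (ξ : Ω → ℝ) :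
    ⨆ x ∈ Set.Ioc (0 : ℝ) 1, ENNReal.ofReal (w x * maxRearr ξ x) ≤
      ENNReal.ofReal (c * p / (p - 1)) *
        ⨆ x ∈ Set.Ioc (0 : ℝ) 1, ENNReal.ofReal (w x * decRearr ξ x) := by
  refine iSup₂_le fun x hx => ?_
  have dilation : ∀ a ∈ Set.Ioc (0 : ℝ) 1, ENNReal.ofReal (w x) ≤
      ENNReal.ofReal c * ENNReal.ofReal (a ^ (-(1 / p))) * ENNReal.ofReal (w (x * a)) := by
    intro a ha
    have hxa : x * a ∈ Set.Ioc (0 : ℝ) 1 :=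
      ⟨mul_pos hx.1 ha.1, mul_le_one₀ hx.2 ha.1.le ha.2⟩
    rw [← ENNReal.ofReal_mul' (Real.rpow_nonneg ha.1.le _), ← ENNReal.ofReal_mul' (hw_nonneg _ hxa)]
    exact ENNReal.ofReal_le_ofReal (hw a ha.1 ha.2 x hx)
  simp only [ENNReal.ofReal_mul' (decRearr_nonneg ξ _)]
  calc ENNReal.ofReal (w x * maxRearr ξ x)
      = ENNReal.ofReal (w x) * ENNReal.ofReal (maxRearr ξ x) :=
        ENNReal.ofReal_mul (hw_nonneg x hx)
    _ ≤ ENNReal.ofReal (w x) *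
        ∫⁻ a in Set.Ioc (0 : ℝ) 1, ENNReal.ofReal (decRearr ξ (x * a)) := by
      gcongr
      exact ofReal_maxRearr_le_lintegral ξ hx.1.ne'
    _ ≤ (∫⁻ a in Set.Ioc (0 : ℝ) 1, ENNReal.ofReal c * ENNReal.ofReal (a ^ (-(1 / p)))) *
        ⨆ y ∈ Set.Ioc (0 : ℝ) 1, ENNReal.ofReal (w y) * ENNReal.ofReal (decRearr ξ y) :=
      mul_lintegral_comp_mul_le_lintegral_mul_iSup (w := fun y => ENNReal.ofReal (w y))
        (f := fun y => ENNReal.ofReal (decRearr ξ y)) (by fun_prop) hx dilation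
    _ = ENNReal.ofReal (c * p / (p - 1)) *
        ⨆ y ∈ Set.Ioc (0 : ℝ) 1, ENNReal.ofReal (w y) * ENNReal.ofReal (decRearr ξ y) := by
      rw [lintegral_Ioc_ofReal_const_mul_rpow_neg_one_div hp]

end Rearrangement

/-- Weighted Lorentz comparison of a function with its maximal rearrangement:
if `w(x) ≤ c·a^{−1/p}·w(x·a)` for all `0 < a ≤ 1`, then the weighted sup of `ξ**` is
controlled by the weighted sup of `ξ*`, with constant `c·p/(p−1)`. -/
theorem weighted_sup_maxRearr_le {Ω : Type*} [MeasureSpace Ω]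
    (hprob : IsProbabilityMeasure (volume : Measure Ω))
    (p c : ℝ) (hp : 1 < p) (hc : 0 < c)
    (w : ℝ → ℝ) (hw_mono : MonotoneOn w (Set.Ioc (0 : ℝ) 1))
    (hw_nonneg : ∀ x ∈ Set.Ioc (0 : ℝ) 1, 0 ≤ w x)
    (hw : ∀ a : ℝ, 0 < a → a ≤ 1 → ∀ x ∈ Set.Ioc (0 : ℝ) 1,
      w x ≤ c * a ^ (-(1 / p) : ℝ) * w (x * a))
    (ξ : Ω → ℝ) (hξ : Integrable ξ volume) :
    ⨆ x ∈ Set.Ioc (0 : ℝ) 1, ENNReal.ofReal (w x * maxRearr ξ x) ≤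
      ENNReal.ofReal (c * p / (p - 1)) *
        ⨆ x ∈ Set.Ioc (0 : ℝ) 1, ENNReal.ofReal (w x * decRearr ξ x) := by
  exact weighted_sup_maxRearr_le_general hp hw_nonneg hw ξ
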